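/- Let F₇ be the field with 7 elements and let f = ax⁴ + bx³y + cx²y² + dxy³ + ey⁴ ∈ F₇[x,y] be a nonzero binary quartic form. Then f is GL₂(F₇)-equivalent to a form a'x⁴ + b'x³y + c'x²y² + d'xy³ + e'y⁴ satisfying one of the following two conditions: (1) a' ∈ {1, 3}, b' = 0, c' ∈ {1, 3}, d' ∈ {0, 1, 2, 3}, and e' ∈ F₇ arbitrary; or (2) a' ∈ {1, 3}, b' = c' = 0, d' ∈ {0, 1, 2, 3}, and e' ∈ {0, 1, 3}. -/

import Mathlib

/-!
A nonzero binary quartic form over `𝔽₇` has at most four of the eight points of `ℙ¹(𝔽₇)` as zeros,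
so it takes a nonzero value at some point (`exists_value_ne_zero`), and a linear change of variables
makes that value the coefficient of `x⁴`. The fourth powers in `𝔽₇ˣ` are the squares `{1, 2, 4}`, of
index two, so rescaling `x` makes this coefficient `1` or `3`. Since `4` is invertible, a shear
`x ↦ x + k y` removes the `x³y` term.

It remains to rescale `y ↦ t y`, which multiplies `c, d, e` by `t², t³, t⁴`. If `c ≠ 0`, then `t`
is chosen up to sign to bring `c` into `{1, 3}`; if `c = 0`, it is chosen up to sign to bring `e`
into `{0, 1, 3}`. In both cases `t³ = ±1`, and the sign of `t` is used to bring `d` into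
`{0, 1, 2, 3}`.
-/

open MvPolynomial

/-- The binary quartic form `a·x⁴ + b·x³y + c·x²y² + d·xy³ + e·y⁴` over `𝔽₇ = ZMod 7`. -/
noncomputable def quartic (a b c d e : ZMod 7) : MvPolynomial (Fin 2) (ZMod 7) :=
  C a * X 0 ^ 4 + C b * X 0 ^ 3 * X 1 + C c * X 0 ^ 2 * X 1 ^ 2
    + C d * X 0 * X 1 ^ 3 + C e * X 1 ^ 4

theorem fact_prime_seven : Fact (Nat.Prime 7) := ⟨by norm_num⟩

/-- The linear substitution `x ↦ a₁₁x + a₁₂y`, `y ↦ a₂₁x + a₂₂y` given by a matrix. -/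
noncomputable def linSubst (A : Matrix (Fin 2) (Fin 2) (ZMod 7)) (i : Fin 2) :
    MvPolynomial (Fin 2) (ZMod 7) :=
  C (A i 0) * X 0 + C (A i 1) * X 1

/-- `GL₂(𝔽₇)`-equivalence of polynomials in two variables, directed from `f` to `g`. -/
def FormEquiv (f g : MvPolynomial (Fin 2) (ZMod 7)) : Prop :=
  ∃ A : Matrix (Fin 2) (Fin 2) (ZMod 7), A.det ≠ 0 ∧ bind₁ (linSubst A) f = g

theorem FormEquiv.refl (f : MvPolynomial (Fin 2) (ZMod 7)) : FormEquiv f f := by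
  have := fact_prime_seven
  refine ⟨1, by simp, ?_⟩
  have h : linSubst 1 = X := by
    funext i
    fin_cases i <;> simp [linSubst, Matrix.one_apply]
  rw [h, bind₁_X_left, AlgHom.id_apply]

theorem FormEquiv.trans {f g h : MvPolynomial (Fin 2) (ZMod 7)}
    (hfg : FormEquiv f g) (hgh : FormEquiv g h) : FormEquiv f h := by
  have := fact_prime_seven
  obtain ⟨A, hA, rfl⟩ := hfg
  obtain ⟨B, hB, rfl⟩ := hgh
  refine ⟨A * B, by rw [Matrix.det_mul]; exact mul_ne_zero hA hB, ?_⟩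
  rw [bind₁_bind₁]
  congr 2
  funext i
  simp only [linSubst, map_add, map_mul, bind₁_C_right, bind₁_X_right, Matrix.mul_apply,
    Fin.sum_univ_two]
  ring

/-- Substituting `x ↦ t x + y`, `y ↦ x` moves the value `f(t, 1)` to the coefficient of `x⁴`. -/
theorem formEquiv_move (a b c d e t : ZMod 7) :
    ∃ b' c' d' e', FormEquiv (quartic a b c d e)
      (quartic (a * t ^ 4 + b * t ^ 3 + c * t ^ 2 + d * t + e) b' c' d' e') := by
  have := fact_prime_seven
  refine ⟨4 * a * t ^ 3 + 3 * b * t ^ 2 + 2 * c * t + d, 6 * a * t ^ 2 + 3 * b * t + c,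
    4 * a * t + b, a, !![t, 1; 1, 0], by simp [Matrix.det_fin_two], ?_⟩
  have h₂ : (C 2 : MvPolynomial (Fin 2) (ZMod 7)) = 2 := map_ofNat C 2
  have h₃ : (C 3 : MvPolynomial (Fin 2) (ZMod 7)) = 3 := map_ofNat C 3
  have h₄ : (C 4 : MvPolynomial (Fin 2) (ZMod 7)) = 4 := map_ofNat C 4
  have h₆ : (C 6 : MvPolynomial (Fin 2) (ZMod 7)) = 6 := map_ofNat C 6
  simp [quartic, linSubst, h₂, h₃, h₄, h₆]
  ring

theorem formEquiv_scale (a b c d e s t : ZMod 7) (hs : s ≠ 0) (ht : t ≠ 0) :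
    FormEquiv (quartic a b c d e) (quartic (a * s ^ 4) (b * s ^ 3 * t) (c * s ^ 2 * t ^ 2)
      (d * s * t ^ 3) (e * t ^ 4)) := by
  have := fact_prime_seven
  refine ⟨!![s, 0; 0, t], by simp [Matrix.det_fin_two, hs, ht], ?_⟩
  simp [quartic, linSubst]
  ring

theorem formEquiv_shear (a b c d e k : ZMod 7) :
    ∃ c' d' e', FormEquiv (quartic a b c d e) (quartic a (b + 4 * a * k) c' d' e') := by
  have := fact_prime_seven
  refine ⟨6 * a * k ^ 2 + 3 * b * k + c, 4 * a * k ^ 3 + 3 * b * k ^ 2 + 2 * c * k + d,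
    a * k ^ 4 + b * k ^ 3 + c * k ^ 2 + d * k + e, !![1, k; 0, 1],
    by simp [Matrix.det_fin_two], ?_⟩
  have h₂ : (C 2 : MvPolynomial (Fin 2) (ZMod 7)) = 2 := map_ofNat C 2
  have h₃ : (C 3 : MvPolynomial (Fin 2) (ZMod 7)) = 3 := map_ofNat C 3
  have h₄ : (C 4 : MvPolynomial (Fin 2) (ZMod 7)) = 4 := map_ofNat C 4
  have h₆ : (C 6 : MvPolynomial (Fin 2) (ZMod 7)) = 6 := map_ofNat C 6
  simp [quartic, linSubst, h₂, h₃, h₄, h₆]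
  ring

/-- A quartic form with some nonzero coefficient takes a nonzero value at `(1, 0)` or at some `(t, 1)`;
this uses that the field has at least four elements. -/
theorem exists_value_ne_zero (a b c d e : ZMod 7)
    (h : ¬(a = 0 ∧ b = 0 ∧ c = 0 ∧ d = 0 ∧ e = 0)) :
    a ≠ 0 ∨ ∃ t : ZMod 7, a * t ^ 4 + b * t ^ 3 + c * t ^ 2 + d * t + e ≠ 0 := by
  by_contra! H
  obtain ⟨rfl, H⟩ := H
  have he : e = 0 := by simpa using H 0
  subst he
  have key : ∀ b c d : ZMod 7, b + c + d = 0 → b * 2 ^ 3 + c * 2 ^ 2 + d * 2 = 0 →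
      b * 3 ^ 3 + c * 3 ^ 2 + d * 3 = 0 → b = 0 ∧ c = 0 ∧ d = 0 := by decide
  obtain ⟨rfl, rfl, rfl⟩ := key b c d (by simpa using H 1) (by simpa using H 2)
    (by simpa using H 3)
  simp at h

theorem exists_leading_ne_zero (a b c d e : ZMod 7) (hf : quartic a b c d e ≠ 0) :
    ∃ a' b' c' d' e', a' ≠ 0 ∧ FormEquiv (quartic a b c d e) (quartic a' b' c' d' e') := by
  have h : ¬(a = 0 ∧ b = 0 ∧ c = 0 ∧ d = 0 ∧ e = 0) := by
    rintro ⟨rfl, rfl, rfl, rfl, rfl⟩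
    simp [quartic] at hf
  rcases exists_value_ne_zero a b c d e h with ha | ⟨t, ht⟩
  · exact ⟨a, b, c, d, e, ha, FormEquiv.refl _⟩
  · obtain ⟨b', c', d', e', H⟩ := formEquiv_move a b c d e t
    exact ⟨_, b', c', d', e', ht, H⟩

theorem exists_depressed (a b c d e : ZMod 7) (hf : quartic a b c d e ≠ 0) :
    ∃ a' c' d' e', (a' = 1 ∨ a' = 3) ∧
      FormEquiv (quartic a b c d e) (quartic a' 0 c' d' e') := by
  obtain ⟨a₁, b₁, c₁, d₁, e₁, ha₁, H₁⟩ := exists_leading_ne_zero a b c d e hf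
  have hs : ∀ a : ZMod 7, a ≠ 0 → ∃ s : ZMod 7, s ≠ 0 ∧ (a * s ^ 4 = 1 ∨ a * s ^ 4 = 3) := by
    decide
  obtain ⟨s, hs₀, hs⟩ := hs a₁ ha₁
  have H₂ := formEquiv_scale a₁ b₁ c₁ d₁ e₁ s 1 hs₀ (by decide)
  have hk : ∀ a b : ZMod 7, a ≠ 0 → ∃ k : ZMod 7, b + 4 * a * k = 0 := by decide
  obtain ⟨k, hk⟩ := hk (a₁ * s ^ 4) (b₁ * s ^ 3 * 1) (by rcases hs with h | h <;> rw [h] <;> decide)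
  obtain ⟨c', d', e', H₃⟩ := formEquiv_shear (a₁ * s ^ 4) (b₁ * s ^ 3 * 1)
    (c₁ * s ^ 2 * 1 ^ 2) (d₁ * s * 1 ^ 3) (e₁ * 1 ^ 4) k
  rw [hk] at H₃
  exact ⟨_, c', d', e', hs, (H₁.trans H₂).trans H₃⟩

/-- The choice of the factor `t` in `y ↦ t y`: its class modulo `±1` normalizes `c`, or `e` when
`c = 0`, and its sign normalizes `d`. -/
theorem exists_scaling (c d e : ZMod 7) : ∃ t : ZMod 7, t ≠ 0 ∧
    (d * t ^ 3 = 0 ∨ d * t ^ 3 = 1 ∨ d * t ^ 3 = 2 ∨ d * t ^ 3 = 3) ∧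
    ((c * t ^ 2 = 1 ∨ c * t ^ 2 = 3) ∨
      (c * t ^ 2 = 0 ∧ (e * t ^ 4 = 0 ∨ e * t ^ 4 = 1 ∨ e * t ^ 4 = 3))) := by
  have h₁ : ∀ c d : ZMod 7, c ≠ 0 → ∃ t : ZMod 7, t ≠ 0 ∧
      (d * t ^ 3 = 0 ∨ d * t ^ 3 = 1 ∨ d * t ^ 3 = 2 ∨ d * t ^ 3 = 3) ∧
      (c * t ^ 2 = 1 ∨ c * t ^ 2 = 3) := by decide
  have h₂ : ∀ d e : ZMod 7, ∃ t : ZMod 7, t ≠ 0 ∧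
      (d * t ^ 3 = 0 ∨ d * t ^ 3 = 1 ∨ d * t ^ 3 = 2 ∨ d * t ^ 3 = 3) ∧
      (e * t ^ 4 = 0 ∨ e * t ^ 4 = 1 ∨ e * t ^ 4 = 3) := by decide
  by_cases hc : c = 0
  · obtain ⟨t, ht, hd, he⟩ := h₂ d e
    exact ⟨t, ht, hd, Or.inr ⟨by simp [hc], he⟩⟩
  · obtain ⟨t, ht, hd, hc⟩ := h₁ c d hc
    exact ⟨t, ht, hd, Or.inl hc⟩

/-- Every nonzero binary quartic form
`f = ax⁴ + bx³y + cx²y² + dxy³ + ey⁴` over `𝔽₇` is `GL₂(𝔽₇)`-equivalent (via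
`f ↦ f(a₁₁x + a₁₂y, a₂₁x + a₂₂y)` for an invertible matrix) to a form
`a'x⁴ + b'x³y + c'x²y² + d'xy³ + e'y⁴` with either
(1) `a' ∈ {1,3}`, `b' = 0`, `c' ∈ {1,3}`, `d' ∈ {0,1,2,3}`, `e'` arbitrary, or
(2) `a' ∈ {1,3}`, `b' = c' = 0`, `d' ∈ {0,1,2,3}`, `e' ∈ {0,1,3}`. -/
theorem stmt_15 (a b c d e : ZMod 7) (hf : quartic a b c d e ≠ 0) :
    ∃ (a' b' c' d' e' : ZMod 7) (A : Matrix (Fin 2) (Fin 2) (ZMod 7)),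
      A.det ≠ 0 ∧
      MvPolynomial.bind₁
        (fun i => MvPolynomial.C (A i 0) * MvPolynomial.X 0
          + MvPolynomial.C (A i 1) * MvPolynomial.X 1) (quartic a b c d e)
        = quartic a' b' c' d' e' ∧
      ((a' ∈ ({1, 3} : Set (ZMod 7)) ∧ b' = 0 ∧ c' ∈ ({1, 3} : Set (ZMod 7)) ∧
          d' ∈ ({0, 1, 2, 3} : Set (ZMod 7))) ∨
        (a' ∈ ({1, 3} : Set (ZMod 7)) ∧ b' = 0 ∧ c' = 0 ∧
          d' ∈ ({0, 1, 2, 3} : Set (ZMod 7)) ∧ e' ∈ ({0, 1, 3} : Set (ZMod 7)))) := by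
  obtain ⟨a₁, c₁, d₁, e₁, ha, H₁⟩ := exists_depressed a b c d e hf
  obtain ⟨t, ht, hd, hce⟩ := exists_scaling c₁ d₁ e₁
  have H₂ := formEquiv_scale a₁ 0 c₁ d₁ e₁ 1 t (by decide) ht
  simp only [one_pow, mul_one, zero_mul] at H₂
  obtain ⟨A, hA, hAf⟩ := H₁.trans H₂
  refine ⟨a₁, 0, c₁ * t ^ 2, d₁ * t ^ 3, e₁ * t ^ 4, A, hA, hAf, ?_⟩
  simp only [Set.mem_insert_iff, Set.mem_singleton_iff]
  rcases hce with hc | ⟨hc, he⟩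
  · exact Or.inl ⟨ha, trivial, hc, hd⟩
  · exact Or.inr ⟨ha, trivial, hc, hd, he⟩
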